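/- Let R > 0 and A > 0. Let ψ : ℝ³ → ℝ be continuous and nonnegative, with ψ(x) → 0 as |x| → ∞, twice continuously differentiable on the open set {x ∈ ℝ³ : |x| > R}, and satisfying Δψ(x) ≥ A ψ(x) for all |x| > R. Then there exists a constant C_A > 0 such that ψ(x) ≤ C_A e^{-√A |x|} for all x with |x| ≥ R. -/

import Mathlib

open MeasureTheory Filter Set

/-- The Laplacian `Δf = ∑_{j=1}^{3} ∂²f/∂x_j²` of a function on `ℝ³`. -/
noncomputable def laplacian (f : EuclideanSpace ℝ (Fin 3) → ℝ)
    (x : EuclideanSpace ℝ (Fin 3)) : ℝ :=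
  ∑ i : Fin 3,
    fderiv ℝ (fun y => fderiv ℝ f y (EuclideanSpace.single i 1)) x (EuclideanSpace.single i 1)

/-! The barrier `φ(x) = C e^{-√A ‖x‖}` satisfies `Δφ = (A - (n - 1) √A / ‖x‖) φ ≤ A φ` away from
the origin of an `n`-dimensional space. For `C` large, `ψ ≤ φ` on the sphere of radius `R`. If
`ψ - φ` were positive somewhere outside that sphere, then, as its positive part vanishes at
infinity, it would attain a positive maximum there, where `0 < A (ψ - φ) ≤ Δ(ψ - φ)` contradicts the
second derivative test. -/

open scoped Laplacian Topology

section SecondDerivativeTest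

theorem deriv_deriv_nonpos_of_isLocalMax {f : ℝ → ℝ} {a : ℝ} (hmax : IsLocalMax f a)
    (hf : ContinuousAt f a) : deriv (deriv f) a ≤ 0 := by
  by_contra! hpos
  have hmin : IsLocalMin f a := isLocalMin_of_deriv_deriv_pos hpos hmax.deriv_eq_zero hf
  have hconst : f =ᶠ[𝓝 a] fun _ => f a := by
    filter_upwards [hmax, hmin] with t hle hge using le_antisymm hle hge
  simp [hconst.deriv.deriv_eq] at hpos

variable {E F : Type*} [NormedAddCommGroup E] [NormedSpace ℝ E] [NormedAddCommGroup F]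
  [NormedSpace ℝ F] {x : E}

theorem tendsto_add_smul_nhds_zero (x v : E) :
    Tendsto (fun t : ℝ => x + t • v) (𝓝 0) (𝓝 x) :=
  Continuous.tendsto' (by fun_prop) 0 x (by simp)

theorem fderiv_fderiv_apply_const {f : E → F} (hf : ContDiffAt ℝ 2 f x) (v w : E) :
    fderiv ℝ (fun y => fderiv ℝ f y v) x w = fderiv ℝ (fderiv ℝ f) x w v := by
  have hfderiv : ContDiffAt ℝ 1 (fderiv ℝ f) x := hf.fderiv_right (by norm_num)
  simp [fderiv_clm_apply (hfderiv.differentiableAt one_ne_zero) (differentiableAt_const v)]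

theorem deriv_deriv_comp_add_smul {f : E → F} (hf : ContDiffAt ℝ 2 f x) (v : E) :
    deriv (deriv fun t : ℝ => f (x + t • v)) 0 = fderiv ℝ (fderiv ℝ f) x v v := by
  have hfirst : deriv (fun t : ℝ => f (x + t • v)) =ᶠ[𝓝 0] fun t => fderiv ℝ f (x + t • v) v := by
    filter_upwards [(tendsto_add_smul_nhds_zero x v).eventually (hf.eventually (by simp))] with t ht
    exact (ht.differentiableAt two_ne_zero).deriv_comp_add_smul
  have hfderiv : ContDiffAt ℝ 1 (fun y => fderiv ℝ f y v) x :=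
    (hf.fderiv_right (by norm_num)).clm_apply contDiffAt_const
  have hsecond := DifferentiableAt.deriv_comp_add_smul (x := x) (y := v) (t := (0 : ℝ))
    (by simpa using hfderiv.differentiableAt one_ne_zero)
  rw [hfirst.deriv_eq, hsecond, zero_smul, add_zero, fderiv_fderiv_apply_const hf]

theorem fderiv_fderiv_nonpos_of_isLocalMax {f : E → ℝ} (hmax : IsLocalMax f x)
    (hf : ContDiffAt ℝ 2 f x) (v : E) : fderiv ℝ (fderiv ℝ f) x v v ≤ 0 := by
  rw [← deriv_deriv_comp_add_smul hf]
  apply deriv_deriv_nonpos_of_isLocalMax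
  · filter_upwards [(tendsto_add_smul_nhds_zero x v).eventually hmax] with t ht
    simpa using ht
  · simpa [ContinuousAt, Function.comp_def] using hf.continuousAt.tendsto.comp
      (tendsto_add_smul_nhds_zero x v)

end SecondDerivativeTest

section Laplacian

variable {E : Type*} [NormedAddCommGroup E] [InnerProductSpace ℝ E] [FiniteDimensional ℝ E]

theorem laplacian_eq_sum_fderiv_fderiv {F ι : Type*} [NormedAddCommGroup F] [NormedSpace ℝ F]
    [Fintype ι] (b : OrthonormalBasis ι ℝ E) (f : E → F) (x : E) :
    Δ f x = ∑ i, fderiv ℝ (fderiv ℝ f) x (b i) (b i) := by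
  simp [InnerProductSpace.laplacian_eq_iteratedFDeriv_orthonormalBasis f b,
    iteratedFDeriv_two_apply]

theorem laplacian_nonpos_of_isLocalMax {f : E → ℝ} {x : E} (hmax : IsLocalMax f x)
    (hf : ContDiffAt ℝ 2 f x) : Δ f x ≤ 0 := by
  rw [laplacian_eq_sum_fderiv_fderiv (stdOrthonormalBasis ℝ E)]
  exact Finset.sum_nonpos fun _ _ => fderiv_fderiv_nonpos_of_isLocalMax hmax hf _

theorem laplacian_eq_of_contDiffAt {f : EuclideanSpace ℝ (Fin 3) → ℝ}
    {x : EuclideanSpace ℝ (Fin 3)} (hf : ContDiffAt ℝ 2 f x) : laplacian f x = Δ f x := by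
  simp [laplacian, laplacian_eq_sum_fderiv_fderiv (EuclideanSpace.basisFun (Fin 3) ℝ),
    fderiv_fderiv_apply_const hf]

end Laplacian

section RadialFunctions

variable {E : Type*} [NormedAddCommGroup E] [InnerProductSpace ℝ E]

theorem hasFDerivAt_norm_of_ne_zero {x : E} (hx : x ≠ 0) :
    HasFDerivAt (fun y : E => ‖y‖) (‖x‖⁻¹ • innerSL ℝ x) x := by
  have hsqrt := (hasStrictFDerivAt_norm_sq x).hasFDerivAt.sqrt (by positivity)
  simp only [Real.sqrt_sq (norm_nonneg _)] at hsqrt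
  convert hsqrt using 1
  ext v
  simp
  ring

theorem hasFDerivAt_radial {g : ℝ → ℝ} {g' : ℝ} {x : E} (hx : x ≠ 0) (hg : HasDerivAt g g' ‖x‖) :
    HasFDerivAt (fun y : E => g ‖y‖) ((g' / ‖x‖) • innerSL ℝ x) x := by
  rw [div_eq_mul_inv, mul_smul]
  exact hg.comp_hasFDerivAt x (hasFDerivAt_norm_of_ne_zero hx)

theorem fderiv_fderiv_radial {g : ℝ → ℝ} {x : E} (hx : x ≠ 0) (hg : ContDiffAt ℝ 2 g ‖x‖)
    (v : E) :
    fderiv ℝ (fderiv ℝ fun y : E => g ‖y‖) x v v =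
      deriv g ‖x‖ / ‖x‖ * ‖v‖ ^ 2 +
        (deriv (deriv g) ‖x‖ - deriv g ‖x‖ / ‖x‖) / ‖x‖ ^ 2 * inner ℝ x v ^ 2 := by
  have hnorm : ‖x‖ ≠ 0 := norm_ne_zero_iff.2 hx
  have hfirst : fderiv ℝ (fun y : E => g ‖y‖) =ᶠ[𝓝 x]
      fun y => (deriv g ‖y‖ / ‖y‖) • innerSL ℝ y := by
    filter_upwards [continuous_norm.continuousAt.eventually (hg.eventually (by simp)),
      isOpen_ne.mem_nhds hx] with y hgy hy
    exact (hasFDerivAt_radial hy (hgy.differentiableAt (by norm_num)).hasDerivAt).fderiv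
  have hderiv : HasDerivAt (deriv g) (deriv (deriv g) ‖x‖) ‖x‖ :=
    ((hg.derivWithin (m := 1) (by norm_num)).differentiableAt (by norm_num)).hasDerivAt
  have hsecond := (hasFDerivAt_radial hx (hderiv.div (hasDerivAt_id ‖x‖) hnorm)).fun_smul
    (innerSL ℝ (E := E)).hasFDerivAt
  simp only [Pi.div_apply, id] at hsecond
  rw [hfirst.fderiv_eq, hsecond.fderiv]
  change deriv g ‖x‖ / ‖x‖ * inner ℝ v v +
    (deriv (deriv g) ‖x‖ * ‖x‖ - deriv g ‖x‖ * 1) / ‖x‖ ^ 2 / ‖x‖ * inner ℝ x v * inner ℝ x v = _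
  rw [real_inner_self_eq_norm_sq]
  field_simp

theorem contDiffAt_mul_exp_neg_mul_norm (C k : ℝ) {x : E} (hx : x ≠ 0) :
    ContDiffAt ℝ 2 (fun y : E => C * Real.exp (-k * ‖y‖)) x :=
  contDiffAt_const.mul (contDiffAt_const.mul (contDiffAt_norm ℝ hx)).exp

variable [FiniteDimensional ℝ E]

theorem laplacian_radial {g : ℝ → ℝ} {x : E} (hx : x ≠ 0) (hg : ContDiffAt ℝ 2 g ‖x‖) :
    Δ (fun y : E => g ‖y‖) x =
      deriv (deriv g) ‖x‖ + (Module.finrank ℝ E - 1) / ‖x‖ * deriv g ‖x‖ := by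
  have hnorm : ‖x‖ ≠ 0 := norm_ne_zero_iff.2 hx
  rw [laplacian_eq_sum_fderiv_fderiv (stdOrthonormalBasis ℝ E)]
  simp only [fderiv_fderiv_radial hx hg, Finset.sum_add_distrib, ← Finset.mul_sum,
    OrthonormalBasis.sum_sq_inner_left, OrthonormalBasis.norm_eq_one, one_pow,
    Finset.sum_const, Finset.card_univ, Fintype.card_fin, nsmul_eq_mul, mul_one]
  field_simp
  ring

theorem laplacian_mul_exp_neg_mul_norm (C k : ℝ) {x : E} (hx : x ≠ 0) :
    Δ (fun y : E => C * Real.exp (-k * ‖y‖)) x =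
      (k ^ 2 - (Module.finrank ℝ E - 1) * k / ‖x‖) * (C * Real.exp (-k * ‖x‖)) := by
  have hderiv : deriv (fun r => Real.exp (-k * r)) = fun r => -k * Real.exp (-k * r) := by
    ext r
    simpa [mul_comm] using ((hasDerivAt_id r).const_mul (-k)).exp.deriv
  have hderiv_mul (c : ℝ) :
      deriv (fun r => c * Real.exp (-k * r)) = fun r => c * (-k * Real.exp (-k * r)) := by
    rw [deriv_const_mul_field', hderiv]
  rw [laplacian_radial (g := fun r => C * Real.exp (-k * r)) hx (by fun_prop)]
  simp only [hderiv_mul, deriv_const_mul_field, hderiv]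
  ring

theorem laplacian_mul_exp_neg_mul_norm_le {C k : ℝ} (hC : 0 ≤ C) (hk : 0 ≤ k) {x : E}
    (hx : x ≠ 0) :
    Δ (fun y : E => C * Real.exp (-k * ‖y‖)) x ≤ k ^ 2 * (C * Real.exp (-k * ‖x‖)) := by
  have : Nontrivial E := nontrivial_of_ne x 0 hx
  have hdim : (1 : ℝ) ≤ Module.finrank ℝ E := mod_cast Module.finrank_pos (R := ℝ) (M := E)
  have hdrop : 0 ≤ (Module.finrank ℝ E - 1) * k / ‖x‖ :=
    div_nonneg (mul_nonneg (sub_nonneg.2 hdim) hk) (norm_nonneg x)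
  rw [laplacian_mul_exp_neg_mul_norm C k hx]
  gcongr
  linarith

end RadialFunctions

section MaximumPrinciple

variable {E : Type*} [NormedAddCommGroup E] [InnerProductSpace ℝ E] [FiniteDimensional ℝ E]
  {Ω : Set E} {A : ℝ}

theorem nonpos_on_closure_of_mul_le_laplacian {w : E → ℝ} (hΩ : IsOpen Ω) (hA : 0 < A)
    (hcont : ContinuousOn w (closure Ω)) (hsmooth : ContDiffOn ℝ 2 w Ω)
    (hdecay : ∀ ε > 0, ∀ᶠ x in cocompact E ⊓ 𝓟 (closure Ω), w x < ε)
    (hfrontier : ∀ x ∈ frontier Ω, w x ≤ 0) (hsub : ∀ x ∈ Ω, A * w x ≤ Δ w x) :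
    ∀ x ∈ closure Ω, w x ≤ 0 := by
  intro x₀ hx₀
  by_contra! hpos
  obtain ⟨x, hx, hmax⟩ := hcont.exists_isMaxOn' isClosed_closure hx₀
    ((hdecay _ hpos).mono fun _ => le_of_lt)
  have hwx : 0 < w x := hpos.trans_le (hmax hx₀)
  have hxΩ : x ∈ Ω := by
    by_contra hx_notMem
    exact hwx.not_ge (hfrontier x ⟨hx, by rwa [hΩ.interior_eq]⟩)
  have hnhds : Ω ∈ 𝓝 x := hΩ.mem_nhds hxΩ
  have hlap : Δ w x ≤ 0 := laplacian_nonpos_of_isLocalMax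
    (hmax.isLocalMax (mem_of_superset hnhds subset_closure)) (hsmooth.contDiffAt hnhds)
  linarith [hsub x hxΩ, mul_pos hA hwx]

theorem le_on_closure_of_mul_le_laplacian_of_laplacian_le_mul {u v : E → ℝ} (hΩ : IsOpen Ω)
    (hA : 0 < A) (hu_cont : ContinuousOn u (closure Ω)) (hv_cont : ContinuousOn v (closure Ω))
    (hu_smooth : ContDiffOn ℝ 2 u Ω) (hv_smooth : ContDiffOn ℝ 2 v Ω)
    (hdecay : ∀ ε > 0, ∀ᶠ x in cocompact E ⊓ 𝓟 (closure Ω), u x - v x < ε)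
    (hfrontier : ∀ x ∈ frontier Ω, u x ≤ v x)
    (hu_sub : ∀ x ∈ Ω, A * u x ≤ Δ u x) (hv_super : ∀ x ∈ Ω, Δ v x ≤ A * v x) :
    ∀ x ∈ closure Ω, u x ≤ v x := by
  intro x hx
  refine sub_nonpos.1 (nonpos_on_closure_of_mul_le_laplacian (w := u - v) hΩ hA
    (hu_cont.sub hv_cont) (hu_smooth.sub hv_smooth) hdecay
    (fun y hy => sub_nonpos.2 (hfrontier y hy)) (fun y hy => ?_) x hx)
  have hnhds : Ω ∈ 𝓝 y := hΩ.mem_nhds hy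
  rw [(hu_smooth.contDiffAt hnhds).laplacian_sub (hv_smooth.contDiffAt hnhds), Pi.sub_apply]
  linarith [hu_sub y hy, hv_super y hy]

end MaximumPrinciple

theorem exists_le_mul_exp_neg_mul_norm_on_sphere {E : Type*} [NormedAddCommGroup E] [ProperSpace E]
    {f : E → ℝ} {R : ℝ} (k : ℝ) (hf : ContinuousOn f (Metric.sphere 0 R)) :
    ∃ C : ℝ, 0 < C ∧ ∀ x, ‖x‖ = R → f x ≤ C * Real.exp (-k * ‖x‖) := by
  obtain ⟨M, hM⟩ := (isCompact_sphere (0 : E) R).bddAbove_image hf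
  refine ⟨max M 1 * Real.exp (k * R), by positivity, fun x hx => ?_⟩
  calc
    f x ≤ max M 1 := (hM (mem_image_of_mem f (by simpa using hx))).trans (le_max_left M 1)
    _ = max M 1 * Real.exp (k * R) * Real.exp (-k * ‖x‖) := by
      rw [hx, mul_assoc, ← Real.exp_add]
      simp

theorem exponential_upper_bound_general {E : Type*} [NormedAddCommGroup E] [InnerProductSpace ℝ E]
    [FiniteDimensional ℝ E] {R A : ℝ} (hR : 0 ≤ R) (hA : 0 < A) {ψ : E → ℝ}
    (hψ_cont : ContinuousOn ψ {x | R ≤ ‖x‖})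
    (hψ_decay : ∀ ε > 0, ∀ᶠ x in cocompact E, ψ x < ε)
    (hψ_smooth : ContDiffOn ℝ 2 ψ {x | R < ‖x‖})
    (hψ_sub : ∀ x, R < ‖x‖ → A * ψ x ≤ Δ ψ x) :
    ∃ C : ℝ, 0 < C ∧ ∀ x, R ≤ ‖x‖ → ψ x ≤ C * Real.exp (-√A * ‖x‖) := by
  obtain ⟨C, hC, hsphere⟩ := exists_le_mul_exp_neg_mul_norm_on_sphere (√A)
    (hψ_cont.mono fun x (hx : x ∈ Metric.sphere 0 R) => (mem_sphere_zero_iff_norm.1 hx).ge)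
  refine ⟨C, hC, fun x hx => ?_⟩
  rcases hx.eq_or_lt with hx | hx
  · exact hsphere x hx.symm
  have hclosure : closure {x : E | R < ‖x‖} ⊆ {x | R ≤ ‖x‖} :=
    closure_lt_subset_le continuous_const continuous_norm
  have hne_zero (y : E) (hy : R < ‖y‖) : y ≠ 0 := norm_pos_iff.1 (hR.trans_lt hy)
  refine le_on_closure_of_mul_le_laplacian_of_laplacian_le_mul
    (v := fun y => C * Real.exp (-√A * ‖y‖)) (isOpen_lt continuous_const continuous_norm) hA
    (hψ_cont.mono hclosure) (by fun_prop) hψ_smooth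
    (fun y hy => (contDiffAt_mul_exp_neg_mul_norm C (√A) (hne_zero y hy)).contDiffWithinAt)
    (fun ε hε => ?_)
    (fun y hy => hsphere y (frontier_lt_subset_eq continuous_const continuous_norm hy).symm)
    hψ_sub (fun y hy => ?_) x (subset_closure hx)
  · filter_upwards [(hψ_decay ε hε).filter_mono inf_le_left] with y hy
    exact (sub_le_self _ (by positivity)).trans_lt hy
  · simpa [Real.sq_sqrt hA.le] using
      laplacian_mul_exp_neg_mul_norm_le hC.le (Real.sqrt_nonneg A) (hne_zero y hy)

/-- exponential upper bound.  If `ψ ≥ 0` is continuous on `ℝ³`, tends to `0`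
at infinity, is `C²` on `{|x| > R}` and satisfies `Δψ ≥ A ψ` there (with `A > 0`), then
`ψ(x) ≤ C_A e^{-√A |x|}` for `|x| ≥ R`. -/
theorem exponential_upper_bound
    (R A : ℝ) (hR : 0 < R) (hA : 0 < A)
    (ψ : EuclideanSpace ℝ (Fin 3) → ℝ)
    (hψ_cont : Continuous ψ) (hψ_nonneg : ∀ x, 0 ≤ ψ x)
    (hψ_decay : Tendsto ψ (cocompact (EuclideanSpace ℝ (Fin 3))) (nhds 0))
    (hψ_smooth : ContDiffOn ℝ 2 ψ {x | R < ‖x‖})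
    (hψ_sub : ∀ x : EuclideanSpace ℝ (Fin 3), R < ‖x‖ → A * ψ x ≤ laplacian ψ x) :
    ∃ C : ℝ, 0 < C ∧ ∀ x : EuclideanSpace ℝ (Fin 3), R ≤ ‖x‖ →
      ψ x ≤ C * Real.exp (-Real.sqrt A * ‖x‖) := by
  have hopen : IsOpen {x : EuclideanSpace ℝ (Fin 3) | R < ‖x‖} :=
    isOpen_lt continuous_const continuous_norm
  refine exponential_upper_bound_general hR.le hA hψ_cont.continuousOn
    (fun ε hε => hψ_decay.eventually_lt_const hε) hψ_smooth fun x hx => ?_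
  rw [← laplacian_eq_of_contDiffAt (hψ_smooth.contDiffAt (hopen.mem_nhds hx))]
  exact hψ_sub x hx
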